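/- arXiv:2305.19808 — 3 statements merged into one kernel-verified Lean document; each statement's English description precedes it below -/
import Mathlib

section
/- If x is an irrational real number that is not a quadratic irrational, then x is not periodic under f_Γ: for every integer N ≥ 1 one has f_Γ^[N](x) ≠ x. -/
/-!
Every iterate of `fGamma` acts on the orbit of `x` as an integral Möbius map
`x ↦ (a x + b) / (c x + d)`. If `x` is a fixed point of it, then `c x² + (d - a) x - b = 0`, and
since `x` is neither rational nor quadratic over `ℤ` this forces `c = 0`, so the denominator
`q = c x + d` is the nonzero integer `d`.

On the other hand `fGamma` is weakly expanding: a translation step leaves `q` unchanged, while an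
inversion step at `y` with `|y| < 1` multiplies `q` by `y`. Hence `|q| ≤ 1`, with `|q| < 1` as soon
as one inversion has occurred, which is impossible for a nonzero integer. If no inversion has
occurred, the orbit has moved monotonically towards `0` by unit steps, so it has not returned
to `x`. The invariant `fGamma_iterate_invariant` records both alternatives.
-/

noncomputable def fGamma (x : ℝ) : ℝ :=
  if x ≤ -1 then x + 1
  else if x < 1 then -1 / x
  else x - 1

lemma fGamma_irrational {y : ℝ} (hy : Irrational y) : Irrational (fGamma y) := by
  unfold fGamma
  split_ifs
  · simpa using hy.add_intCast 1
  · have h : -1 / y = -y⁻¹ := by ring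
    rw [h]
    exact hy.inv.neg
  · simpa using hy.sub_intCast 1

lemma fGamma_iterate_irrational {x : ℝ} (hx : Irrational x) (n : ℕ) :
    Irrational (fGamma^[n] x) := by
  induction n with
  | zero => simpa using hx
  | succ n ih =>
    rw [Function.iterate_succ_apply']
    exact fGamma_irrational ih

/-- The `n`-th iterate is a Möbius map with denominator `q = c x + d`, where `|q| ≤ 1`. Either some
inversion has made `|q| < 1`, or only translations in a single direction have been applied. -/
lemma fGamma_iterate_invariant {x : ℝ} (hx : Irrational x) (n : ℕ) :
    ∃ a b c d : ℤ, (c * x + d : ℝ) ≠ 0 ∧ fGamma^[n] x * (c * x + d) = a * x + b ∧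
      |(c * x + d : ℝ)| ≤ 1 ∧
      (|(c * x + d : ℝ)| < 1 ∨ (0 < fGamma^[n] x ∧ fGamma^[n] x = x - n) ∨
        (fGamma^[n] x < 0 ∧ fGamma^[n] x = x + n)) := by
  induction n with
  | zero =>
    refine ⟨1, 0, 0, 1, by simp, by simp, by simp, Or.inr ?_⟩
    rcases lt_or_gt_of_ne hx.ne_zero with h | h
    · right; simpa using h
    · left; simpa using h
  | succ n ih =>
    obtain ⟨a, b, c, d, hq, hmob, hle, halt⟩ := ih
    have hy := fGamma_iterate_irrational hx n
    have hfy := fGamma_irrational hy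
    rw [Function.iterate_succ_apply']
    generalize fGamma^[n] x = y at *
    have hy0 := hy.ne_zero
    have hfy0 := hfy.ne_zero
    by_cases h1 : y ≤ -1
    · have hf : fGamma y = y + 1 := by simp [fGamma, h1]
      rw [hf] at hfy0 ⊢
      refine ⟨a + c, b + d, c, d, hq, by push_cast; linarith, hle, ?_⟩
      rcases halt with h | ⟨h, -⟩ | ⟨-, h⟩
      · exact Or.inl h
      · linarith
      · exact Or.inr (Or.inr ⟨lt_of_le_of_ne (by linarith) hfy0, by push_cast; linarith⟩)
    by_cases h2 : y < 1
    · have hf : fGamma y = -1 / y := by simp [fGamma, h1, h2]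
      rw [hf]
      have hlt : |(a * x + b : ℝ)| < 1 := by
        rw [← hmob, abs_mul]
        have hyabs : |y| < 1 := abs_lt.mpr ⟨not_le.mp h1, h2⟩
        exact lt_of_le_of_lt (mul_le_of_le_one_right (abs_nonneg y) hle) hyabs
      refine ⟨-c, -d, a, b, ?_, ?_, hlt.le, Or.inl hlt⟩
      · rw [← hmob]; exact mul_ne_zero hy0 hq
      · rw [← hmob]; push_cast; field_simp; ring
    · have hf : fGamma y = y - 1 := by simp [fGamma, h1, h2]
      rw [hf] at hfy0 ⊢
      refine ⟨a - c, b - d, c, d, hq, by push_cast; linarith, hle, ?_⟩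
      rcases halt with h | ⟨-, h⟩ | ⟨h, -⟩
      · exact Or.inl h
      · exact Or.inr (Or.inl ⟨lt_of_le_of_ne (by linarith) hfy0.symm, by push_cast; linarith⟩)
      · linarith

theorem stmt_2 (x : ℝ) (hx : Irrational x)
    (hnotquad : ¬ ∃ a b c : ℤ, a ≠ 0 ∧ (a : ℝ) * x ^ 2 + (b : ℝ) * x + (c : ℝ) = 0) :
    ∀ N : ℕ, 1 ≤ N → fGamma^[N] x ≠ x := by
  intro N hN hfix
  obtain ⟨a, b, c, d, hq, hmob, -, halt⟩ := fGamma_iterate_invariant hx N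
  rw [hfix] at hmob halt
  have hc : c = 0 := by
    by_contra hc
    exact hnotquad ⟨c, d - a, -b, hc, by push_cast; linarith⟩
  have hN' : (1 : ℝ) ≤ N := by exact_mod_cast hN
  rcases halt with h | ⟨-, h⟩ | ⟨-, h⟩
  · simp only [hc, Int.cast_zero, zero_mul, zero_add] at h hq
    have hd : |d| < 1 := by exact_mod_cast h
    exact hq (by exact_mod_cast Int.abs_lt_one_iff.mp hd)
  · linarith
  · linarith
end

section
/- For every rational number x, the forward orbit of x under the extension of f_Γ to ℝ ∪ {∞} eventually reaches ∞: there exists n ∈ ℕ such that f̂_Γ^[n](x) = ∞. -/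
/-!
This is the Euclidean algorithm. Write a rational as `p / q` with `q > 0`. If `|p| ≥ q`, one step
keeps `q` and lowers `|p|` by `q`; if `0 < |p| < q`, one step interchanges `|p|` and `q`. The
weight `2 * q + |p|` strictly decreases in both cases, so the orbit must reach a fraction with
`p = 0`, which the next step sends to `∞`.
-/

open OnePoint

noncomputable def fHat (p : OnePoint ℝ) : OnePoint ℝ :=
  Option.elim p (∞ : OnePoint ℝ)
    (fun x => if x = 0 then (∞ : OnePoint ℝ) else ((fGamma x : ℝ) : OnePoint ℝ))

theorem fHat_zero : fHat ((0 : ℝ) : OnePoint ℝ) = ∞ := by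
  change (if (0 : ℝ) = 0 then (∞ : OnePoint ℝ) else _) = _
  simp

theorem fHat_coe {x : ℝ} (hx : x ≠ 0) : fHat (x : OnePoint ℝ) = (fGamma x : ℝ) := by
  change (if x = 0 then (∞ : OnePoint ℝ) else _) = _
  simp [hx]

/-- The orbit of `p / q` reaches `∞`, by induction on a bound `N` for the weight `2 * q + |p|`;
the fraction need not be in lowest terms. -/
theorem exists_iterate_div (N : ℕ) : ∀ p q : ℤ, 0 < q → 2 * q + |p| ≤ N →
    ∃ n : ℕ, fHat^[n] (((p : ℝ) / (q : ℝ) : ℝ) : OnePoint ℝ) = ∞ := by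
  induction N with
  | zero =>
    intro p q hq h
    have := abs_nonneg p
    push_cast at h
    omega
  | succ N ih =>
    intro p q hq h
    push_cast at h
    have hqR : (0 : ℝ) < q := by exact_mod_cast hq
    by_cases hp : p = 0
    · exact ⟨1, by simpa [hp] using fHat_zero⟩
    have hpR : (p : ℝ) ≠ 0 := by exact_mod_cast hp
    have hx : (p : ℝ) / q ≠ 0 := div_ne_zero hpR hqR.ne'
    suffices H : ∃ p' q' : ℤ, 0 < q' ∧ 2 * q' + |p'| ≤ N ∧
        fGamma ((p : ℝ) / q) = (p' : ℝ) / q' by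
      obtain ⟨p', q', hq', hN, hf⟩ := H
      obtain ⟨n, hn⟩ := ih p' q' hq' hN
      exact ⟨n + 1, by rw [Function.iterate_succ_apply, fHat_coe hx, hf, hn]⟩
    have hle : (p : ℝ) / q ≤ -1 ↔ p ≤ -q := by
      rw [div_le_iff₀ hqR, neg_one_mul]
      exact_mod_cast Iff.rfl
    have hlt : (p : ℝ) / q < 1 ↔ p < q := by
      rw [div_lt_one hqR]
      exact_mod_cast Iff.rfl
    unfold fGamma
    simp only [hle, hlt]
    split_ifs with h1 h2
    · refine ⟨p + q, q, hq, by grind, ?_⟩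
      push_cast
      field_simp
    · -- The new denominator must be positive, so the sign of `p` moves to the numerator.
      rcases lt_or_gt_of_ne hp with hneg | hpos
      · refine ⟨q, -p, by omega, by grind, ?_⟩
        push_cast
        field_simp
      · refine ⟨-q, p, hpos, by grind, ?_⟩
        push_cast
        field_simp
    · refine ⟨p - q, q, hq, by grind, ?_⟩
      push_cast
      field_simp

theorem stmt_12 (x : ℚ) :
    ∃ n : ℕ, fHat^[n] (((x : ℝ) : OnePoint ℝ)) = (∞ : OnePoint ℝ) := by
  obtain ⟨n, hn⟩ := exists_iterate_div (2 * (x.den : ℤ) + |x.num|).toNat x.num x.den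
    (by exact_mod_cast x.den_pos) (Int.self_le_toNat _)
  refine ⟨n, ?_⟩
  rw [Rat.cast_def]
  exact_mod_cast hn
end

section
/- The cube root of 2 is not periodic under f_Γ: for every integer N ≥ 1, f_Γ^[N](∛2) ≠ ∛2. -/
theorem abs_fGamma_of_one_le {x : ℝ} (h : 1 ≤ |x|) : |fGamma x| = |x| - 1 := by
  unfold fGamma
  rcases le_abs.mp h with h1 | h1
  · rw [if_neg (by linarith), if_neg (by linarith), abs_of_nonneg (by linarith : (0 : ℝ) ≤ x),
      abs_of_nonneg (by linarith)]
  · rw [if_pos (by linarith), abs_of_nonpos (by linarith : x ≤ 0), abs_of_nonpos (by linarith)]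
    ring

theorem abs_fGamma_of_lt_one {x : ℝ} (h : |x| < 1) : |fGamma x| = 1 / |x| := by
  unfold fGamma
  rw [abs_lt] at h
  rw [if_neg (by linarith), if_pos h.2, abs_div]
  simp

theorem irrational_of_cube_eq_two {α : ℝ} (h : α ^ 3 = 2) : Irrational α := by
  refine irrational_nrt_of_notint_nrt 3 2 (by exact_mod_cast h) ?_ (by norm_num)
  rintro ⟨y, rfl⟩
  have h' : y ^ 3 = 2 := by exact_mod_cast h
  have h1 : 1 < y := by
    by_contra hc
    have : y ≤ 1 := by omega
    nlinarith [sq_nonneg y, sq_nonneg (y + 1)]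
  nlinarith [sq_nonneg y]

theorem irrational_linear {α : ℝ} (hα : Irrational α) {a b : ℤ}
    (h : (a : ℝ) * α + b = 0) : a = 0 ∧ b = 0 := by
  have ha : a = 0 := by
    by_contra ha
    have ha' : (a : ℝ) ≠ 0 := by exact_mod_cast ha
    refine hα ⟨-(b : ℚ) / a, ?_⟩
    push_cast
    field_simp
    linarith
  subst ha
  simpa using h

theorem cbrt_two_no_quadratic {α : ℝ} (h3 : α ^ 3 = 2) {a b c : ℤ}
    (h : (a : ℝ) * α ^ 2 + b * α + c = 0) : a = 0 ∧ b = 0 ∧ c = 0 := by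
  have hα := irrational_of_cube_eq_two h3
  -- Multiplying the relation by `α` gives `b α² + c α + 2 a = 0`; eliminate `α²` between the two.
  obtain ⟨h1, h2⟩ := irrational_linear hα (a := b ^ 2 - a * c) (b := b * c - 2 * a ^ 2) (by
    push_cast
    linear_combination (b - a * α) * h + (a : ℝ) ^ 2 * h3)
  have ha : a = 0 := by
    by_contra ha
    have ha' : (a : ℝ) ≠ 0 := by exact_mod_cast ha
    have hb : b ^ 3 = 2 * a ^ 3 := by linear_combination b * h1 + a * h2
    have hb' : (b : ℝ) ^ 3 = 2 * (a : ℝ) ^ 3 := by exact_mod_cast hb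
    -- So `b / a` is a rational cube root of `2`.
    have hq : ((b : ℝ) / a) ^ 3 = 2 := by
      rw [div_pow, hb']
      field_simp
    exact irrational_of_cube_eq_two hq ⟨(b : ℚ) / a, by push_cast; rfl⟩
  subst ha
  have hb : b = 0 := by simpa using h1
  subst hb
  simpa using h

/-- After `n + 1` steps of the orbit of `α`, the number `α` is the image of `|fGamma^[n+1] α|`
under a nonnegative integer Möbius map of determinant `±1` other than the identity. -/
theorem exists_moebius {α : ℝ} (h3 : α ^ 3 = 2) (h1 : 1 ≤ α) (n : ℕ) :
    ∃ p q r s : ℤ, 0 ≤ p ∧ 0 ≤ q ∧ 0 ≤ r ∧ 0 ≤ s ∧ 3 ≤ p + q + r + s ∧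
      (p * s - q * r) ^ 2 = 1 ∧
      α * (r * |fGamma^[n + 1] α| + s) = p * |fGamma^[n + 1] α| + q := by
  induction n with
  | zero =>
    refine ⟨1, 1, 0, 1, by norm_num, by norm_num, by norm_num, by norm_num, by norm_num,
      by norm_num, ?_⟩
    have habs : |α| = α := abs_of_nonneg (by linarith)
    simp only [zero_add, Function.iterate_one]
    rw [abs_fGamma_of_one_le (by rwa [habs]), habs]
    push_cast
    ring
  | succ n ih =>
    obtain ⟨p, q, r, s, hp, hq, hr, hs, hsum, hdet, heq⟩ := ih
    rw [Function.iterate_succ_apply']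
    set x := fGamma^[n + 1] α with hx
    rcases le_or_gt 1 |x| with h | h
    · refine ⟨p, p + q, r, r + s, hp, by omega, hr, by omega, by omega, ?_, ?_⟩
      · rw [← hdet]; ring
      · rw [abs_fGamma_of_one_le h]
        push_cast
        linear_combination heq
    · -- Irrationality of `α` keeps the orbit away from `0`, where `-1 / 0 = 0` would intervene.
      have hx0 : |x| ≠ 0 := by
        intro h0
        rw [h0] at heq
        obtain ⟨hs0, hq0⟩ := irrational_linear (irrational_of_cube_eq_two h3) (a := s) (b := -q)
          (by push_cast; linear_combination heq)
        have hq0 : q = 0 := by omega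
        subst hs0 hq0
        norm_num at hdet
      refine ⟨q, p, s, r, hq, hp, hs, hr, by omega, ?_, ?_⟩
      · rw [← hdet]; ring
      · rw [abs_fGamma_of_lt_one h]
        field_simp
        linear_combination heq

theorem stmt_15 :
    ∀ N : ℕ, 1 ≤ N → fGamma^[N] ((2 : ℝ) ^ ((1 : ℝ) / 3)) ≠ (2 : ℝ) ^ ((1 : ℝ) / 3) := by
  intro N hN hper
  have h3 : ((2 : ℝ) ^ ((1 : ℝ) / 3)) ^ 3 = 2 := by
    rw [← Real.rpow_natCast, ← Real.rpow_mul (by norm_num)]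
    norm_num
  have h1 : 1 ≤ (2 : ℝ) ^ ((1 : ℝ) / 3) := Real.one_le_rpow (by norm_num) (by norm_num)
  generalize (2 : ℝ) ^ ((1 : ℝ) / 3) = α at hper h3 h1
  obtain ⟨n, rfl⟩ : ∃ n, N = n + 1 := ⟨N - 1, by omega⟩
  obtain ⟨p, q, r, s, hp, hq, hr, hs, hsum, hdet, heq⟩ := exists_moebius h3 h1 n
  rw [hper, abs_of_nonneg (by linarith : (0 : ℝ) ≤ α)] at heq
  obtain ⟨hr0, hps, hq0⟩ := cbrt_two_no_quadratic h3 (a := r) (b := s - p) (c := -q)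
    (by push_cast; linear_combination heq)
  have hq0 : q = 0 := by omega
  have hsp : s = p := by omega
  subst hr0 hq0 hsp
  have h2 : 2 ≤ s := by omega
  nlinarith [mul_le_mul h2 h2 (by norm_num) hs]
end
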